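/- Let r > 0 with r ≠ 1, set p_r := 2r / log₂(2 + 2^r), and define H_r(x, y) := 1 + (x + y)^r + (xy)^r − ((1 + x^{p_r})(1 + y^{p_r}))^{r/p_r} for x, y ≥ 0. If r > 1 then H_r(x, y) ≤ H_r(√(xy), √(xy)) for all x, y ≥ 0; and if r < 1 then H_r(x, y) ≥ H_r(√(xy), √(xy)) for all x, y ≥ 0. -/

import Mathlib

/-- The function `H_r(x,y) = 1 + (x+y)^r + (xy)^r - ((1+x^{p_r})(1+y^{p_r}))^{r/p_r}`
with `p_r = 2r / log₂(2 + 2^r)`. -/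
noncomputable def Hfun (r : ℝ) (x y : ℝ) : ℝ :=
  1 + (x + y) ^ r + (x * y) ^ r -
    ((1 + x ^ (2 * r / Real.logb 2 (2 + 2 ^ r))) *
      (1 + y ^ (2 * r / Real.logb 2 (2 + 2 ^ r)))) ^
        (r / (2 * r / Real.logb 2 (2 + 2 ^ r)))

lemma dnn {a b : ℝ} (h : 0 < b) : 0 ≤ a / b ↔ 0 ≤ a := by
  rw [le_div_iff₀ h, zero_mul]

lemma up_of_deriv (g h : ℝ → ℝ) (hg : ∀ t, HasDerivAt g (h t) t) (g0 : g 0 = 0)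
    (hh : ∀ s t, 0 < s → s < t → 0 ≤ h s → 0 ≤ h t) :
    ∀ s t, 0 < s → s < t → 0 ≤ g s → g s ≤ g t := by
  intro s t hs hst hgs
  obtain ⟨c, hc, hc'⟩ := exists_hasDerivAt_eq_slope g h hs
    (fun x _ => (hg x).continuousAt.continuousWithinAt) (fun x _ => hg x)
  have hc0 : 0 ≤ h c := by
    rw [hc', g0]; apply div_nonneg <;> linarith
  obtain ⟨e, he, he'⟩ := exists_hasDerivAt_eq_slope g h hst
    (fun x _ => (hg x).continuousAt.continuousWithinAt) (fun x _ => hg x)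
  have he0 : 0 ≤ h e := hh c e hc.1 (by linarith [hc.2, he.1]) hc0
  rw [he'] at he0
  have : 0 < t - s := by linarith
  have := (dnn this).1 he0
  linarith

noncomputable def DD (t : ℝ) : ℝ := Real.exp t + Real.exp (-t)

lemma DD_pos (t : ℝ) : 0 < DD t := by unfold DD; positivity

lemma DD_deriv (t : ℝ) : HasDerivAt DD (Real.exp t - Real.exp (-t)) t := by
  have h1 := Real.hasDerivAt_exp t
  have h2 := (hasDerivAt_neg t).exp
  have : HasDerivAt DD _ t := h1.add h2
  convert this using 1
  ring

lemma DD_lt {s t : ℝ} (hs : 0 < s) (hst : s < t) : DD s < DD t := by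
  have e1 : DD s = 2 * Real.cosh s := by rw [Real.cosh_eq]; unfold DD; ring
  have e2 : DD t = 2 * Real.cosh t := by rw [Real.cosh_eq]; unfold DD; ring
  rw [e1, e2]
  have : Real.cosh s < Real.cosh t := by
    rw [Real.cosh_lt_cosh, abs_of_pos hs, abs_of_pos (hs.trans hst)]; exact hst
  linarith

noncomputable def KK (r p D : ℝ) : ℝ :=
  (2 - p) * D ^ (2 * r - 2) + (r - p) * D ^ r - 4 * (r - 1) * D ^ (r - 2) - p

noncomputable def aa (r t : ℝ) : ℝ := Real.exp t * DD t ^ (r - 1) + 1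
noncomputable def bb (r t : ℝ) : ℝ := Real.exp (-t) * DD t ^ (r - 1) + 1

lemma aa_pos (r t : ℝ) : 0 < aa r t := by
  have := DD_pos t
  unfold aa; positivity
lemma bb_pos (r t : ℝ) : 0 < bb r t := by
  have := DD_pos t
  unfold bb; positivity

noncomputable def gg (r p t : ℝ) : ℝ := Real.log (aa r t) - Real.log (bb r t) - p * t

lemma gg_deriv (r p t : ℝ) :
    HasDerivAt (gg r p) (KK r p (DD t) / (aa r t * bb r t)) t := by
  have hD := DD_pos t
  have hN : HasDerivAt (fun t => DD t ^ (r - 1)) _ t :=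
    (DD_deriv t).rpow_const (p := r - 1) (Or.inl hD.ne')
  have h1 := Real.hasDerivAt_exp t
  have h2 := (hasDerivAt_neg t).exp
  have ha : HasDerivAt (aa r) _ t := (h1.mul hN).add_const 1
  have hb : HasDerivAt (bb r) _ t := (h2.mul hN).add_const 1
  have hg : HasDerivAt (gg r p) _ t :=
    ((ha.log (aa_pos r t).ne').sub (hb.log (bb_pos r t).ne')).sub ((hasDerivAt_id t).const_mul p)
  convert hg using 1
  have ha0 := (aa_pos r t).ne'
  have hb0 := (bb_pos r t).ne'
  have e1 : DD t ^ (2 * r - 2) = (DD t ^ (r - 2)) ^ 2 * DD t ^ 2 := by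
    rw [← Real.rpow_natCast, ← Real.rpow_natCast, ← Real.rpow_mul hD.le, ← Real.rpow_add hD]
    congr 1; push_cast; ring
  have e2 : DD t ^ r = DD t ^ (r - 2) * DD t ^ 2 := by
    rw [← Real.rpow_natCast, ← Real.rpow_add hD]
    congr 1; push_cast; ring
  have e3 : DD t ^ (r - 1) = DD t ^ (r - 2) * DD t := by
    nth_rw 3 [← Real.rpow_one (DD t)]
    rw [← Real.rpow_add hD]
    congr 1; ring
  have e4 : r - 1 - 1 = r - 2 := by ring
  have e5 : Real.exp t * Real.exp (-t) = 1 := by rw [← Real.exp_add]; simp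
  rw [e4, div_eq_iff (mul_ne_zero ha0 hb0), sub_mul, sub_mul]
  have x1 : ∀ u v w : ℝ, v ≠ 0 → u / v * (v * w) = u * w := by intros; field_simp
  have x2 : ∀ u v w : ℝ, v ≠ 0 → u / v * (w * v) = u * w := by intros; field_simp
  rw [x1 _ _ _ ha0, x2 _ _ _ hb0]
  unfold KK aa bb
  rw [e1, e2, e3]
  generalize DD t ^ (r - 2) = M
  unfold DD
  have e6 : Real.exp (-t) = (Real.exp t)⁻¹ := Real.exp_neg t
  rw [e6]
  have := (Real.exp_pos t).ne'
  generalize Real.exp t = X at *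
  field_simp
  ring

noncomputable def ff (r p t : ℝ) : ℝ :=
  Real.log (2 + DD t ^ r) - 2 * r / p * Real.log (DD (p / 2 * t))

lemma ff_deriv (r p t : ℝ) (hp : 0 < p) :
    HasDerivAt (ff r p) (2 * r * (aa r t - bb r t * Real.exp (p * t)) /
      ((aa r t + bb r t) * (Real.exp (p * t) + 1))) t := by
  have hD := DD_pos t
  have hN : HasDerivAt (fun t => DD t ^ r) _ t :=
    (DD_deriv t).rpow_const (p := r) (Or.inl hD.ne')
  have hpos : 0 < 2 + DD t ^ r := by positivity
  have h1 := (hN.const_add 2).log hpos.ne'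
  have h2 := ((DD_deriv (p / 2 * t)).comp t ((hasDerivAt_id t).const_mul (p / 2))).log
    (DD_pos _).ne'
  have h3 : HasDerivAt (ff r p) _ t := h1.sub (h2.const_mul (2 * r / p))
  convert h3 using 1
  have e3 : DD t ^ r = DD t ^ (r - 1) * DD t := by
    nth_rw 3 [← Real.rpow_one (DD t)]
    rw [← Real.rpow_add hD]
    congr 1; ring
  have hab : aa r t + bb r t = 2 + DD t ^ r := by
    rw [e3]; unfold aa bb; nth_rw 4 [DD]; ring
  rw [hab]
  have hE : Real.exp (p * t) = Real.exp (p / 2 * t) ^ 2 := by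
    rw [← Real.exp_nat_mul]; congr 1; push_cast; ring
  have e6 : Real.exp (-(p / 2 * t)) = (Real.exp (p / 2 * t))⁻¹ := Real.exp_neg _
  have e7 : Real.exp (-t) = (Real.exp t)⁻¹ := Real.exp_neg _
  have hX := Real.exp_pos t
  have hY := Real.exp_pos (p / 2 * t)
  have hNp : 0 < DD t ^ (r - 1) := by positivity
  simp only [Function.comp]
  rw [hE, e3]
  unfold aa bb
  generalize DD t ^ (r - 1) = N at *
  unfold DD
  rw [e6, e7]
  generalize Real.exp t = X at *
  generalize Real.exp (p / 2 * t) = Y at *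
  have : 2 + N * (X + X⁻¹) ≠ 0 := by positivity
  have : 2 * X + N * (X ^ 2 + 1) ≠ 0 := by positivity
  field_simp
  ring

lemma sgn_iff (r p t : ℝ) :
    (0 ≤ gg r p t ↔ 0 ≤ aa r t - bb r t * Real.exp (p * t)) ∧
    (gg r p t ≤ 0 ↔ aa r t - bb r t * Real.exp (p * t) ≤ 0) := by
  have ha := aa_pos r t
  have hb := bb_pos r t
  have e : gg r p t = Real.log (aa r t) - Real.log (bb r t * Real.exp (p * t)) := by
    rw [Real.log_mul hb.ne' (Real.exp_pos _).ne', Real.log_exp]; unfold gg; ring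
  rw [e, sub_nonneg, sub_nonneg, sub_nonpos, sub_nonpos]
  exact ⟨Real.log_le_log_iff (by positivity) ha, Real.log_le_log_iff ha (by positivity)⟩

lemma ff_zero (r p : ℝ) (h : (2 : ℝ) ^ (2 * r / p) = 2 + 2 ^ r) : ff r p 0 = 0 := by
  have : DD 0 = 2 := by unfold DD; norm_num
  unfold ff
  rw [mul_zero, this, ← h, Real.log_rpow (by norm_num)]; ring

lemma DD_eq (t : ℝ) : DD t = Real.exp t * (1 + Real.exp (-2 * t)) := by
  unfold DD; rw [mul_add, ← Real.exp_add]; ring_nf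

open Filter Topology in
lemma ff_tendsto (r p : ℝ) (hr : 0 < r) (hp : 0 < p) :
    Tendsto (ff r p) atTop (𝓝 0) := by
  have key : ∀ t, ff r p t = Real.log (2 * Real.exp (-r * t) + (1 + Real.exp (-2 * t)) ^ r)
      - 2 * r / p * Real.log (1 + Real.exp (-p * t)) := by
    intro t
    have h1 : 2 + DD t ^ r
        = Real.exp (r * t) * (2 * Real.exp (-r * t) + (1 + Real.exp (-2 * t)) ^ r) := by
      rw [DD_eq, Real.mul_rpow (by positivity) (by positivity), ← Real.exp_mul, mul_add,
        mul_comm t r]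
      have : Real.exp (r * t) * (2 * Real.exp (-r * t)) = 2 := by
        rw [mul_left_comm, ← Real.exp_add]; simp
      rw [this]
    unfold ff
    rw [h1, DD_eq, Real.log_mul (by positivity) (by positivity),
      Real.log_mul (by positivity) (by positivity), Real.log_exp, Real.log_exp]
    have : -2 * (p / 2 * t) = -p * t := by ring
    rw [this]
    field_simp
    ring
  have ex : ∀ c : ℝ, 0 < c → Tendsto (fun t => Real.exp (-c * t)) atTop (𝓝 0) := by
    intro c hc
    apply Real.tendsto_exp_atBot.comp
    exact tendsto_id.const_mul_atTop_of_neg (by linarith)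
  have l1 : Tendsto (fun t => 2 * Real.exp (-r * t) + (1 + Real.exp (-2 * t)) ^ r) atTop
      (𝓝 (2 * 0 + (1 + 0) ^ r)) :=
    ((ex r hr).const_mul 2).add
      (((ex 2 (by norm_num)).const_add 1).rpow_const (Or.inl (by norm_num)))
  have l2 : Tendsto (fun t => 1 + Real.exp (-p * t)) atTop (𝓝 (1 + 0)) := (ex p hp).const_add 1
  have := (l1.log (by simp)).sub ((l2.log (by simp)).const_mul (2 * r / p))
  rw [funext key]
  simpa using this

lemma core (r p σ : ℝ) (hr : 0 < r) (hp : 0 < p) (hσ : σ = 1 ∨ σ = -1)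
    (h : (2 : ℝ) ^ (2 * r / p) = 2 + 2 ^ r)
    (hK : ∀ D E, 0 < D → D < E → 0 ≤ σ * KK r p D → 0 ≤ σ * KK r p E)
    (t : ℝ) (ht : 0 ≤ t) : σ * ff r p t ≤ 0 := by
  have G : ∀ s t, 0 < s → s < t → 0 ≤ σ * gg r p s → σ * gg r p s ≤ σ * gg r p t := by
    apply up_of_deriv (fun t => σ * gg r p t) _ (fun t => (gg_deriv r p t).const_mul σ)
    · simp [gg, aa, bb]
    · intro s t hs hst hh
      have a1 := mul_pos (aa_pos r s) (bb_pos r s)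
      have a2 := mul_pos (aa_pos r t) (bb_pos r t)
      rw [← mul_div_assoc] at hh ⊢
      rw [dnn a1] at hh
      rw [dnn a2]
      exact hK _ _ (DD_pos s) (DD_lt hs hst) hh
  have S : ∀ t, 0 ≤ σ * gg r p t ↔ 0 ≤ σ * (2 * r * (aa r t - bb r t * Real.exp (p * t)) /
      ((aa r t + bb r t) * (Real.exp (p * t) + 1))) := by
    intro t
    have ha := aa_pos r t
    have hb := bb_pos r t
    have a1 : 0 < (aa r t + bb r t) * (Real.exp (p * t) + 1) := by positivity
    obtain ⟨s1, s2⟩ := sgn_iff r p t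
    rw [← mul_div_assoc, dnn a1, mul_left_comm σ (2 * r),
      mul_nonneg_iff_of_pos_left (by positivity : 0 < 2 * r)]
    rcases hσ with rfl | rfl
    · simpa using s1
    · rw [neg_one_mul, neg_one_mul, neg_nonneg, neg_nonneg]; exact s2
  have F : ∀ s t, 0 < s → s < t → 0 ≤ σ * ff r p s → σ * ff r p s ≤ σ * ff r p t := by
    apply up_of_deriv (fun t => σ * ff r p t) _ (fun t => (ff_deriv r p t hp).const_mul σ)
    · simp [ff_zero r p h]
    · intro s t hs hst hh
      rw [← S] at hh ⊢
      exact hh.trans (G s t hs hst hh)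
  by_contra! hc
  have ht' : 0 < t := by
    rcases ht.eq_or_lt with h0 | h0
    · rw [← h0, ff_zero r p h] at hc; simp at hc
    · exact h0
  have lim := (ff_tendsto r p hr hp).const_mul σ
  rw [mul_zero] at lim
  have : σ * ff r p t ≤ 0 := by
    apply ge_of_tendsto lim
    filter_upwards [Filter.eventually_gt_atTop t] with u hu
    exact F t u ht' hu hc.le
  linarith

lemma K_gt (r p : ℝ) (hr : 1 < r) (hp : 0 < p) (hp2 : p < 2) (hpr : p < r) :
    ∀ D E, 0 < D → D < E → 0 ≤ (1:ℝ) * KK r p D → 0 ≤ (1:ℝ) * KK r p E := by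
  intro D E hD hDE h
  rw [one_mul] at *
  have hE := hD.trans hDE
  have m1 : D ^ r ≤ E ^ r := Real.rpow_le_rpow hD.le hDE.le (by linarith)
  rcases le_total r 2 with h2 | h2
  · have m2 : D ^ (2 * r - 2) ≤ E ^ (2 * r - 2) := Real.rpow_le_rpow hD.le hDE.le (by linarith)
    have m3 : E ^ (r - 2) ≤ D ^ (r - 2) := Real.rpow_le_rpow_of_nonpos hD hDE.le (by linarith)
    unfold KK at *
    have := mul_le_mul_of_nonneg_left m1 (by linarith : 0 ≤ r - p)
    have := mul_le_mul_of_nonneg_left m2 (by linarith : 0 ≤ 2 - p)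
    have := mul_le_mul_of_nonneg_left m3 (by linarith : 0 ≤ 4 * (r - 1))
    linarith
  · have fac : ∀ D : ℝ, 0 < D → KK r p D = D ^ (r - 2) *
        ((2 - p) * D ^ r + (r - p) * D ^ (2:ℝ) - 4 * (r - 1) - p * D ^ (2 - r)) := by
      intro D hD
      have e1 : D ^ (2 * r - 2) = D ^ (r - 2) * D ^ r := by
        rw [← Real.rpow_add hD]; ring_nf
      have e2 : D ^ r = D ^ (r - 2) * D ^ (2:ℝ) := by
        rw [← Real.rpow_add hD]; ring_nf
      have e3 : 1 = D ^ (r - 2) * D ^ (2 - r) := by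
        rw [← Real.rpow_add hD]; ring_nf; simp
      unfold KK
      rw [e1]
      linear_combination (r - p) * e2 - p * e3
    rw [fac D hD, mul_nonneg_iff_of_pos_left (by positivity)] at h
    rw [fac E hE, mul_nonneg_iff_of_pos_left (by positivity)]
    have m2 : D ^ (2:ℝ) ≤ E ^ (2:ℝ) := Real.rpow_le_rpow hD.le hDE.le (by norm_num)
    have m3 : E ^ (2 - r) ≤ D ^ (2 - r) := Real.rpow_le_rpow_of_nonpos hD hDE.le (by linarith)
    have := mul_le_mul_of_nonneg_left m1 (by linarith : 0 ≤ 2 - p)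
    have := mul_le_mul_of_nonneg_left m2 (by linarith : 0 ≤ r - p)
    have := mul_le_mul_of_nonneg_left m3 hp.le
    linarith

lemma K_lt (r p : ℝ) (hr0 : 0 < r) (hr : r < 1) (hp2 : p < 2) (hpr : r < p) :
    ∀ D E, 0 < D → D < E → 0 ≤ (-1:ℝ) * KK r p D → 0 ≤ (-1:ℝ) * KK r p E := by
  intro D E hD hDE h
  have m1 : D ^ r ≤ E ^ r := Real.rpow_le_rpow hD.le hDE.le (by linarith)
  have m2 : E ^ (2 * r - 2) ≤ D ^ (2 * r - 2) := Real.rpow_le_rpow_of_nonpos hD hDE.le (by linarith)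
  have m3 : E ^ (r - 2) ≤ D ^ (r - 2) := Real.rpow_le_rpow_of_nonpos hD hDE.le (by linarith)
  unfold KK at *
  have := mul_le_mul_of_nonneg_left m1 (by linarith : 0 ≤ p - r)
  have := mul_le_mul_of_nonneg_left m2 (by linarith : 0 ≤ 2 - p)
  have := mul_le_mul_of_nonneg_left m3 (by linarith : 0 ≤ 4 * (1 - r))
  linarith

lemma four_pt (φ : ℝ → ℝ) (hφ : ConvexOn ℝ (Set.Ici 0) φ) (u v E : ℝ) (hu : 0 ≤ u)
    (hv : 0 ≤ v) (hE : 0 ≤ E) : φ (E + u) + φ (E + v) ≤ φ E + φ (E + u + v) := by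
  rcases (add_nonneg hu hv).eq_or_lt with h0 | h0
  · have : u = 0 := by linarith
    have : v = 0 := by linarith
    subst_vars; simp
  · have a1 := hφ.2 (Set.mem_Ici.2 hE) (Set.mem_Ici.2 (by linarith : 0 ≤ E + u + v))
      (div_nonneg hv h0.le) (div_nonneg hu h0.le) (by field_simp; ring)
    have a2 := hφ.2 (Set.mem_Ici.2 hE) (Set.mem_Ici.2 (by linarith : 0 ≤ E + u + v))
      (div_nonneg hu h0.le) (div_nonneg hv h0.le) (by field_simp)
    simp only [smul_eq_mul] at a1 a2
    have e1 : v / (u + v) * E + u / (u + v) * (E + u + v) = E + u := by field_simp; ring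
    have e2 : u / (u + v) * E + v / (u + v) * (E + u + v) = E + v := by field_simp; ring
    rw [e1] at a1
    rw [e2] at a2
    have e3 : v / (u + v) = 1 - u / (u + v) := by field_simp; ring
    rw [e3] at a1 a2
    linarith

/-- The function with the exponent as a free parameter. -/
noncomputable def HH (r p x y : ℝ) : ℝ :=
  1 + (x + y) ^ r + (x * y) ^ r - ((1 + x ^ p) * (1 + y ^ p)) ^ (r / p)

lemma HH_symm (r p x y : ℝ) : HH r p x y = HH r p y x := by
  unfold HH; rw [add_comm x y, mul_comm x y, mul_comm (1 + x ^ p)]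

lemma HH_norm (r p s t : ℝ) (hp : 0 < p) (hs : 0 < s) :
    HH r p (s * Real.exp t) (s * Real.exp (-t)) =
      1 + (s * s) ^ r + s ^ r * (DD t ^ r - (DD (p * t) + (s ^ p + (s ^ p)⁻¹)) ^ (r / p)) := by
  have hsp : 0 < s ^ p := by positivity
  have e1 : s * Real.exp t + s * Real.exp (-t) = s * DD t := by unfold DD; ring
  have e2 : s * Real.exp t * (s * Real.exp (-t)) = s * s := by
    rw [mul_mul_mul_comm, ← Real.exp_add]; simp
  have e3 : (1 + (s * Real.exp t) ^ p) * (1 + (s * Real.exp (-t)) ^ p)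
      = s ^ p * (DD (p * t) + (s ^ p + (s ^ p)⁻¹)) := by
    rw [Real.mul_rpow hs.le (by positivity), Real.mul_rpow hs.le (by positivity),
      ← Real.exp_mul, ← Real.exp_mul]
    unfold DD
    have e : -t * p = -(p * t) := by ring
    rw [e, mul_comm t p, Real.exp_neg]
    have := Real.exp_pos (p * t)
    field_simp
    ring
  have e4 : (s ^ p) ^ (r / p) = s ^ r := by
    rw [← Real.rpow_mul hs.le]; congr 1; field_simp
  have hD := DD_pos t
  have hD' := DD_pos (p * t)
  unfold HH
  rw [e1, e2, e3, Real.mul_rpow hs.le hD.le, Real.mul_rpow hsp.le (by positivity), e4]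
  ring

lemma DD_ge (t : ℝ) : 2 ≤ DD t := by
  have : DD t = 2 * Real.cosh t := by rw [Real.cosh_eq]; unfold DD; ring
  rw [this]; linarith [Real.one_le_cosh t]

lemma main_pos (r p σ : ℝ) (hr : 0 < r) (hp : 0 < p) (hσ : σ = 1 ∨ σ = -1)
    (h : (2 : ℝ) ^ (2 * r / p) = 2 + 2 ^ r)
    (hK : ∀ D E, 0 < D → D < E → 0 ≤ σ * KK r p D → 0 ≤ σ * KK r p E)
    (hc : ConvexOn ℝ (Set.Ici 0) (fun z : ℝ => σ * z ^ (r / p)))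
    (s t : ℝ) (hs : 0 < s) (ht : 0 ≤ t) :
    σ * HH r p (s * Real.exp t) (s * Real.exp (-t)) ≤ σ * HH r p s s := by
  have h0 := HH_norm r p s 0 hp hs
  have d0 : DD 0 = 2 := by unfold DD; norm_num
  rw [mul_zero, neg_zero, Real.exp_zero, mul_one, d0] at h0
  rw [HH_norm r p s t hp hs, h0]
  have hsr : 0 < s ^ r := by positivity
  have hsp : 0 < s ^ p := by positivity
  have hB : 2 ≤ s ^ p + (s ^ p)⁻¹ := by
    have := two_mul_le_add_sq (s ^ p) 1
    have e : s ^ p + (s ^ p)⁻¹ = ((s ^ p) ^ 2 + 1 ^ 2) / s ^ p := by field_simp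
    rw [e, le_div_iff₀ hsp]; linarith
  generalize s ^ p + (s ^ p)⁻¹ = B at *
  have hE := DD_ge (p * t)
  have c := core r p σ hr hp hσ h hK t ht
  have hq : (DD (p / 2 * t)) ^ (2 * r / p) = (DD (p * t) + 2) ^ (r / p) := by
    have : DD (p * t) + 2 = DD (p / 2 * t) ^ (2:ℝ) := by
      rw [Real.rpow_two]
      unfold DD
      have e1 : Real.exp (p * t) = Real.exp (p / 2 * t) ^ 2 := by
        rw [← Real.exp_nat_mul]; congr 1; push_cast; ring
      rw [Real.exp_neg, Real.exp_neg, e1]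
      have := Real.exp_pos (p / 2 * t)
      field_simp
      ring
    rw [this, ← Real.rpow_mul (DD_pos _).le]; congr 1; ring
  have hff : ff r p t = Real.log (2 + DD t ^ r) - Real.log ((DD (p * t) + 2) ^ (r / p)) := by
    unfold ff; rw [← hq, Real.log_rpow (DD_pos _)]
  have hDt := DD_pos t
  have c' : σ * (2 + DD t ^ r) ≤ σ * (DD (p * t) + 2) ^ (r / p) := by
    rw [hff] at c
    rcases hσ with rfl | rfl
    · rw [one_mul, sub_nonpos, Real.log_le_log_iff (by positivity) (by positivity)] at c
      linarith
    · rw [neg_one_mul, neg_nonpos, sub_nonneg,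
        Real.log_le_log_iff (by positivity) (by positivity)] at c
      linarith
  have h4 : ((4:ℝ)) ^ (r / p) = 2 + 2 ^ r := by
    rw [← h, show (4:ℝ) = 2 ^ (2:ℝ) by norm_num, ← Real.rpow_mul (by norm_num)]
    congr 1; ring
  have fp := four_pt _ hc (B - 2) (DD (p * t) - 2) 4 (by linarith) (by linarith) (by norm_num)
  rw [h4, show 4 + (B - 2) = 2 + B by ring, show 4 + (DD (p * t) - 2) = DD (p * t) + 2 by ring,
    show 2 + B + (DD (p * t) - 2) = DD (p * t) + B by ring] at fp
  have fin : σ * (DD t ^ r - (DD (p * t) + B) ^ (r / p)) ≤ σ * (2 ^ r - (2 + B) ^ (r / p)) := by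
    linarith
  have := mul_le_mul_of_nonneg_left fin hsr.le
  linarith

lemma main_all (r p σ : ℝ) (hr : 0 < r) (hp : 0 < p) (hσ : σ = 1 ∨ σ = -1)
    (h : (2 : ℝ) ^ (2 * r / p) = 2 + 2 ^ r)
    (hK : ∀ D E, 0 < D → D < E → 0 ≤ σ * KK r p D → 0 ≤ σ * KK r p E)
    (hc : ConvexOn ℝ (Set.Ici 0) (fun z : ℝ => σ * z ^ (r / p)))
    (x y : ℝ) (hx : 0 ≤ x) (hy : 0 ≤ y) :
    σ * HH r p x y ≤ σ * HH r p (Real.sqrt (x * y)) (Real.sqrt (x * y)) := by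
  wlog hxy : y ≤ x generalizing x y
  · rw [HH_symm, mul_comm x y]; exact this y x hy hx (le_of_not_ge hxy)
  rcases hy.eq_or_lt with h0 | h0
  · subst h0
    have hq : r / p ≠ 0 := by positivity
    have fp := four_pt _ hc 1 (x ^ p) 0 (by norm_num) (by positivity) le_rfl
    simp only [zero_add, Real.zero_rpow hq, Real.one_rpow, mul_zero] at fp
    have e4 : (x ^ p) ^ (r / p) = x ^ r := by
      rw [← Real.rpow_mul hx]; congr 1; field_simp
    rw [e4] at fp
    unfold HH
    simp [Real.zero_rpow hr.ne', Real.zero_rpow hp.ne']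
    linarith
  · have hx0 := h0.trans_le hxy
    set s := Real.sqrt (x * y) with hs
    have hs0 : 0 < s := Real.sqrt_pos.2 (by positivity)
    have hss : s * s = x * y := Real.mul_self_sqrt (by positivity)
    have hsx : s ≤ x := by nlinarith
    have m := main_pos r p σ hr hp hσ h hK hc s (Real.log (x / s)) hs0
      (Real.log_nonneg ((one_le_div hs0).2 hsx))
    rw [Real.exp_neg, Real.exp_log (by positivity)] at m
    have e1 : s * (x / s) = x := by field_simp
    have e2 : s * (x / s)⁻¹ = y := by field_simp; linarith
    rwa [e1, e2] at m

theorem reduction_to_diagonal (r : ℝ) (hr0 : 0 < r) (hr1 : r ≠ 1) :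
    (1 < r → ∀ x y : ℝ, 0 ≤ x → 0 ≤ y →
      Hfun r x y ≤ Hfun r (Real.sqrt (x * y)) (Real.sqrt (x * y))) ∧
    (r < 1 → ∀ x y : ℝ, 0 ≤ x → 0 ≤ y →
      Hfun r (Real.sqrt (x * y)) (Real.sqrt (x * y)) ≤ Hfun r x y) := by
  have hH : ∀ x y, Hfun r x y = HH r (2 * r / Real.logb 2 (2 + 2 ^ r)) x y := fun _ _ => rfl
  simp only [hH]
  have h2r : (0:ℝ) < 2 ^ r := by positivity
  have hL : (2:ℝ) ^ (Real.logb 2 (2 + 2 ^ r)) = 2 + 2 ^ r :=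
    Real.rpow_logb (by norm_num) (by norm_num) (by positivity)
  generalize Real.logb 2 (2 + 2 ^ r) = L at *
  have one_lt : (1:ℝ) < 2 := by norm_num
  have hLr : r < L := by
    rw [← Real.rpow_lt_rpow_left_iff one_lt, hL]; linarith
  have hL0 := hr0.trans hLr
  have hp : 0 < 2 * r / L := by positivity
  have hp2 : 2 * r / L < 2 := by rw [div_lt_iff₀ hL0]; linarith
  have h : (2:ℝ) ^ (2 * r / (2 * r / L)) = 2 + 2 ^ r := by
    rw [← hL]; congr 1; field_simp
  have hq : r / (2 * r / L) = L / 2 := by field_simp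
  have four : (2:ℝ) ^ (2:ℝ) = 4 := by norm_num
  constructor
  · intro hr x y hx hy
    have hL2 : 2 < L := by
      rw [← Real.rpow_lt_rpow_left_iff one_lt, hL, four]
      have := (Real.rpow_lt_rpow_left_iff one_lt).2 hr
      rw [Real.rpow_one] at this; linarith
    have := main_all r (2 * r / L) 1 hr0 hp (Or.inl rfl) h
      (K_gt r _ hr hp hp2 (by rw [div_lt_iff₀ hL0]; nlinarith))
      (by simpa only [one_mul, hq] using convexOn_rpow (by linarith : 1 ≤ L / 2)) x y hx hy
    linarith
  · intro hr x y hx hy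
    have hL2 : L < 2 := by
      rw [← Real.rpow_lt_rpow_left_iff one_lt, hL, four]
      have := (Real.rpow_lt_rpow_left_iff one_lt).2 hr
      rw [Real.rpow_one] at this; linarith
    have cv := (Real.concaveOn_rpow (by linarith : 0 ≤ L / 2) (by linarith : L / 2 ≤ 1)).neg
    have := main_all r (2 * r / L) (-1) hr0 hp (Or.inr rfl) h
      (K_lt r _ hr0 hr hp2 (by rw [lt_div_iff₀ hL0]; nlinarith))
      (by rw [hq]
          have e : (fun z : ℝ => (-1:ℝ) * z ^ (L / 2)) = -fun z : ℝ => z ^ (L / 2) := by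
            funext z; simp
          rw [e]; exact cv) x y hx hy
    linarith
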